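/- The cumulative hierarchy is equivalent to the covered mewos: there exists a function F from the type of covered mewos with carrier in universe u to ZFSet.{u} such that (a) F is surjective; (b) for all covered mewos X, Y, F X = F Y if and only if X and Y are isomorphic as mewos; and (c) for all covered mewos X, Y, F X ∈ F Y if and only if there exists a bounded simulation X < Y. -/

import Mathlib

universe u

/-- A marked extensional wellfounded order (mewo): a type equipped with a wellfounded,
extensional binary relation together with a marking predicate. -/
structure Mewo : Type (u + 1) where
  carrier : Type u
  lt : carrier → carrier → Prop
  wf : WellFounded lt
  ext : ∀ x y : carrier, (∀ z : carrier, lt z x ↔ lt z y) → x = y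
  marked : carrier → Prop

namespace Mewo

/-- An element is covered if some marked element lies reflexive-transitively above it. -/
def Covered (M : Mewo.{u}) : Prop :=
  ∀ x : M.carrier, ∃ x₀ : M.carrier, M.marked x₀ ∧ Relation.ReflTransGen M.lt x x₀

/-- The initial segment `M ↓⁺ x`: carrier is the elements transitively below `x`, with
the restricted order; the marked elements are the immediate predecessors of `x`. -/
def seg (M : Mewo.{u}) (x : M.carrier) : Mewo.{u} where
  carrier := { y : M.carrier // Relation.TransGen M.lt y x }
  lt a b := M.lt a.1 b.1
  wf := by
    have h := InvImage.wf
      (fun a : { y : M.carrier // Relation.TransGen M.lt y x } => a.1) M.wf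
    exact h
  ext := by
    rintro ⟨a, ha⟩ ⟨b, hb⟩ h
    apply Subtype.ext
    apply M.ext
    intro z
    constructor
    · intro hz
      exact (h ⟨z, Relation.TransGen.head hz ha⟩).mp hz
    · intro hz
      exact (h ⟨z, Relation.TransGen.head hz hb⟩).mpr hz
  marked a := M.lt a.1 x

end Mewo

/-- An isomorphism of mewos: a bijection preserving and reflecting order and marking. -/
structure MewoIso (M : Mewo.{u}) (N : Mewo.{u}) where
  toEquiv : M.carrier ≃ N.carrier
  lt_iff : ∀ x y : M.carrier, M.lt x y ↔ N.lt (toEquiv x) (toEquiv y)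
  marked_iff : ∀ x : M.carrier, M.marked x ↔ N.marked (toEquiv x)

/-- `f` is a simulation from `M` to `N`: it preserves markings, is monotone, and has
the initial-segment property. -/
def IsSimulation (M N : Mewo.{u}) (f : M.carrier → N.carrier) : Prop :=
  (∀ x : M.carrier, M.marked x → N.marked (f x)) ∧
  (∀ x y : M.carrier, M.lt x y → N.lt (f x) (f y)) ∧
  (∀ (x : M.carrier) (y : N.carrier), N.lt y (f x) → ∃ x' : M.carrier, M.lt x' x ∧ f x' = y)

/-- A bounded simulation `M < N`: a marked element `y : N` together with an isomorphism
of mewos between `M` and the initial segment `N ↓⁺ y`. -/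
def BoundedSim (M N : Mewo.{u}) : Prop :=
  ∃ y : N.carrier, N.marked y ∧ Nonempty (MewoIso M (N.seg y))

/-!
A covered mewo is exactly the data by which a set `x` is determined: the transitive closure of `x`
ordered by membership, together with the elements of `x` as marked points. The engine is Mostowski's
theorem: a wellfounded extensional relation embeds into `(ZFSet, ∈)` as an initial segment, and in
only one way. The set named by a mewo `M` is the set of images of its marked elements. Coveredness
says that the image of the embedding is the transitive closure of that set, so the set determines
`M` up to isomorphism; and uniqueness of the embedding shows that `M ↓⁺ x` names the image of `x`,
so membership is bounded simulation.
-/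

open Relation
open scoped InitialSeg ZFSet

section Extensional

variable {α β : Type*} {r : α → α → Prop} {s : β → β → Prop}

/-- A relation is extensional if points with the same predecessors are equal. It is stated in the
form of the field `Mewo.ext`, so that this field is a proof of `IsExtensional M.lt`. -/
def IsExtensional (r : α → α → Prop) : Prop :=
  ∀ x y : α, (∀ z : α, r z x ↔ r z y) → x = y

theorem isExtensional_mem : IsExtensional ((· ∈ ·) : ZFSet.{u} → ZFSet.{u} → Prop) :=
  fun _ _ h => ZFSet.ext h

theorem IsExtensional.of_initialSeg (hs : IsExtensional s) (f : r ≼i s) : IsExtensional r := by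
  refine fun x y h => f.inj.1 (hs _ _ fun b => ?_)
  simp only [f.exists_eq_iff_rel, h]

theorem IsExtensional.initialSeg_eq (hs : IsExtensional s) (hr : WellFounded r) (f g : r ≼i s) :
    f = g := by
  ext x
  induction x using hr.induction with
  | _ x ih =>
    refine hs _ _ fun b => ?_
    simp only [f.exists_eq_iff_rel, g.exists_eq_iff_rel]
    exact exists_congr fun a => and_congr_left fun ha => by rw [ih a ha]

end Extensional

section InitialSegments

variable {α β γ : Type*} {r : α → α → Prop} {s : β → β → Prop} {t : γ → γ → Prop}

theorem initialSeg_exists_eq_iff_reflTransGen (f : r ≼i s) {a : α} {b : β} :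
    ReflTransGen s b (f a) ↔ ∃ a', f a' = b ∧ ReflTransGen r a' a := by
  constructor
  · intro h
    induction h using ReflTransGen.head_induction_on with
    | refl => exact ⟨a, rfl, .refl⟩
    | head hbc _ ih =>
      obtain ⟨c, rfl, hc⟩ := ih
      obtain ⟨b, rfl, hb⟩ := f.exists_eq_iff_rel.1 hbc
      exact ⟨b, rfl, hc.head hb⟩
  · rintro ⟨a', rfl, h⟩
    exact h.lift f fun _ _ => f.map_rel_iff.2

theorem exists_relIso_of_range_eq (f : r ↪r t) (g : s ↪r t) (h : Set.range f = Set.range g) :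
    ∃ e : r ≃r s, ∀ a, g (e a) = f a := by
  let e : α ≃ β := (Equiv.ofInjective f f.injective).trans <|
    (Equiv.setCongr h).trans (Equiv.ofInjective g g.injective).symm
  have hge : ∀ a, g (e a) = f a := fun _ => Equiv.apply_ofInjective_symm g.injective _
  refine ⟨⟨e, fun {a b} => ?_⟩, hge⟩
  rw [← g.map_rel_iff, hge, hge, f.map_rel_iff]

theorem exists_initialSeg_range_eq {S : Set β} [Small.{u} S] (hS : ∀ b ∈ S, ∀ c, s c b → c ∈ S) :
    ∃ (ι : Type u) (t : ι → ι → Prop) (f : t ≼i s), Set.range f = S := by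
  let f : Shrink.{u} S ↪ β := (equivShrink S).symm.toEmbedding.trans (.subtype _)
  have hf : Set.range f = S :=
    ((equivShrink S).symm.surjective.range_comp Subtype.val).trans Subtype.range_coe
  refine ⟨_, f ⁻¹'o s, ⟨.preimage f s, fun a c hc => ?_⟩, hf⟩
  exact hf.superset (hS (f a) (hf.subset (Set.mem_range_self a)) c hc)

end InitialSegments

section MostowskiCollapse

variable {α : Type*} {r : α → α → Prop} [∀ a, Small.{u} {b // r b a}]

/-- The Mostowski collapse of a wellfounded relation with small sets of predecessors: it sends `a`
to the set of collapses of its predecessors. -/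
noncomputable def mostowskiCollapse (hr : WellFounded r) : α → ZFSet.{u} :=
  hr.fix fun a ih => ZFSet.range fun b : {b // r b a} => ih b.1 b.2

theorem mem_mostowskiCollapse (hr : WellFounded r) {a : α} {z : ZFSet.{u}} :
    z ∈ mostowskiCollapse hr a ↔ ∃ b, r b a ∧ mostowskiCollapse hr b = z := by
  rw [mostowskiCollapse, hr.fix_eq]
  simp only [ZFSet.mem_range, Subtype.exists, exists_prop]

theorem mostowskiCollapse_injective (hr : WellFounded r) (hext : IsExtensional r) :
    Function.Injective (mostowskiCollapse.{u} hr) := by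
  intro x
  induction x using hr.induction with
  | _ x ih =>
    intro y hxy
    refine hext _ _ fun z => ⟨fun hz => ?_, fun hz => ?_⟩
    · obtain ⟨w, hw, hwz⟩ :=
        (mem_mostowskiCollapse hr).1 (hxy ▸ (mem_mostowskiCollapse hr).2 ⟨z, hz, rfl⟩)
      rwa [ih z hz hwz.symm]
    · obtain ⟨w, hw, hwz⟩ :=
        (mem_mostowskiCollapse hr).1 (hxy.symm ▸ (mem_mostowskiCollapse hr).2 ⟨z, hz, rfl⟩)
      rwa [← ih w hw hwz]

/-- The Mostowski collapse of an extensional relation, as an initial segment embedding into the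
cumulative hierarchy. -/
noncomputable def mostowskiInitialSeg (hr : WellFounded r) (hext : IsExtensional r) :
    r ≼i ((· ∈ ·) : ZFSet.{u} → ZFSet.{u} → Prop) where
  toFun := mostowskiCollapse hr
  inj' := mostowskiCollapse_injective hr hext
  map_rel_iff' := by
    intro a b
    refine (mem_mostowskiCollapse hr).trans ⟨?_, fun h => ⟨a, h, rfl⟩⟩
    rintro ⟨c, hc, hca⟩
    rwa [← mostowskiCollapse_injective hr hext hca]
  mem_range_of_rel' _ _ h :=
    let ⟨b, _, hb⟩ := (mem_mostowskiCollapse hr).1 h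
    ⟨b, hb⟩

end MostowskiCollapse

theorem small_transGen_mem (x : ZFSet.{u}) :
    Small.{u} {z : ZFSet.{u} | TransGen (· ∈ ·) z x} := by
  have hsub : {z | TransGen (· ∈ ·) z x} ⊆ (V_ x.rank : Set ZFSet.{u}) := by
    intro z hz
    induction hz using TransGen.head_induction_on with
    | single hzx => exact ZFSet.subset_vonNeumann_self x hzx
    | head hzy _ hy => exact (ZFSet.isTransitive_vonNeumann _).subset_of_mem hy hzy
  have : Small.{u} (V_ x.rank : Set ZFSet.{u}) := ZFSet.small_coe _
  exact small_subset hsub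

namespace Mewo

variable {M N : Mewo.{u}}

/-- The unique embedding of the order of `M` into the cumulative hierarchy as an initial segment. -/
noncomputable def collapse (M : Mewo.{u}) :
    M.lt ≼i ((· ∈ ·) : ZFSet.{u} → ZFSet.{u} → Prop) :=
  mostowskiInitialSeg M.wf M.ext

/-- The set named by `M`: its elements are the collapses of the marked elements of `M`. -/
noncomputable def toZFSet (M : Mewo.{u}) : ZFSet.{u} :=
  ZFSet.range fun a : {a // M.marked a} => M.collapse a

section Embedding

variable (f : M.lt ≼i ((· ∈ ·) : ZFSet.{u} → ZFSet.{u} → Prop))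

theorem mem_toZFSet {z : ZFSet.{u}} : z ∈ M.toZFSet ↔ ∃ a, M.marked a ∧ f a = z := by
  rw [isExtensional_mem.initialSeg_eq M.wf f M.collapse]
  simp only [toZFSet, ZFSet.mem_range, Subtype.exists, exists_prop]

theorem apply_mem_toZFSet {a : M.carrier} : f a ∈ M.toZFSet ↔ M.marked a := by
  simp only [mem_toZFSet f, f.inj, exists_eq_right]

theorem ofPred_transGen_mem_toZFSet :
    {z | TransGen (· ∈ ·) z M.toZFSet} =
      f '' {a | ∃ a₀, M.marked a₀ ∧ ReflTransGen M.lt a a₀} := by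
  ext z
  simp only [Set.mem_ofPred_eq, Set.mem_image, TransGen.tail'_iff, mem_toZFSet f]
  constructor
  · rintro ⟨_, hz, a₀, ha₀, rfl⟩
    obtain ⟨a, rfl, ha⟩ := (initialSeg_exists_eq_iff_reflTransGen f).1 hz
    exact ⟨a, ⟨a₀, ha₀, ha⟩, rfl⟩
  · rintro ⟨a, ⟨a₀, ha₀, ha⟩, rfl⟩
    exact ⟨f a₀, (initialSeg_exists_eq_iff_reflTransGen f).2 ⟨a, rfl, ha⟩, a₀, ha₀, rfl⟩

theorem covered_iff_range_eq :
    M.Covered ↔ Set.range f = {z | TransGen (· ∈ ·) z M.toZFSet} := by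
  rw [ofPred_transGen_mem_toZFSet f, ← Set.image_univ,
    (EmbeddingLike.injective f).image_injective.eq_iff, eq_comm, Set.eq_univ_iff_forall]
  rfl

end Embedding

theorem toZFSet_eq_of_iso (e : MewoIso M N) : M.toZFSet = N.toZFSet := by
  let i : M.lt ≃r N.lt := ⟨e.toEquiv, (e.lt_iff _ _).symm⟩
  ext z
  rw [mem_toZFSet (i.toInitialSeg.trans N.collapse), mem_toZFSet N.collapse,
    e.toEquiv.surjective.exists]
  simp only [e.marked_iff]
  rfl

theorem Covered.nonempty_iso_of_toZFSet_eq (hM : M.Covered) (hN : N.Covered)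
    (h : M.toZFSet = N.toZFSet) : Nonempty (MewoIso M N) := by
  have hrange : Set.range M.collapse = Set.range N.collapse := by
    rw [(covered_iff_range_eq _).1 hM, (covered_iff_range_eq _).1 hN, h]
  obtain ⟨e, he⟩ : ∃ e : M.lt ≃r N.lt, ∀ a, N.collapse (e a) = M.collapse a :=
    exists_relIso_of_range_eq M.collapse.toRelEmbedding N.collapse.toRelEmbedding hrange
  refine ⟨e.toEquiv, fun _ _ => e.map_rel_iff.symm, fun a => ?_⟩
  rw [← apply_mem_toZFSet M.collapse, ← apply_mem_toZFSet N.collapse, ← he, h]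
  rfl

theorem Covered.toZFSet_eq_iff (hM : M.Covered) (hN : N.Covered) :
    M.toZFSet = N.toZFSet ↔ Nonempty (MewoIso M N) :=
  ⟨hM.nonempty_iso_of_toZFSet_eq hN, fun ⟨e⟩ => toZFSet_eq_of_iso e⟩

/-- The inclusion of `M ↓⁺ x` into `M`, as an initial segment embedding of the orders. -/
def segInclusion (M : Mewo.{u}) (x : M.carrier) : (M.seg x).lt ≼i M.lt where
  toFun := Subtype.val
  inj' := Subtype.val_injective
  map_rel_iff' := Iff.rfl
  mem_range_of_rel' a b h := ⟨⟨b, a.2.head h⟩, rfl⟩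

theorem toZFSet_seg (M : Mewo.{u}) (x : M.carrier) : (M.seg x).toZFSet = M.collapse x := by
  ext z
  rw [mem_toZFSet ((M.segInclusion x).trans M.collapse), M.collapse.exists_eq_iff_rel]
  constructor
  · rintro ⟨a, ha, rfl⟩
    exact ⟨a.1, rfl, ha⟩
  · rintro ⟨a, rfl, ha⟩
    exact ⟨⟨a, .single ha⟩, ha, rfl⟩

theorem covered_seg (M : Mewo.{u}) (x : M.carrier) : (M.seg x).Covered := by
  intro a
  obtain ⟨b, hab, hbx⟩ := TransGen.tail'_iff.1 a.2
  let b' : (M.seg x).carrier := ⟨b, .single hbx⟩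
  obtain ⟨a', haa', h⟩ := (initialSeg_exists_eq_iff_reflTransGen (M.segInclusion x) (a := b')).1 hab
  exact ⟨b', hbx, Subtype.ext haa' ▸ h⟩

theorem Covered.toZFSet_mem_iff (hM : M.Covered) :
    M.toZFSet ∈ N.toZFSet ↔ BoundedSim M N := by
  rw [mem_toZFSet N.collapse]
  refine exists_congr fun y => and_congr_right fun _ => ?_
  rw [← toZFSet_seg, eq_comm, hM.toZFSet_eq_iff (N.covered_seg y)]

/-- The mewo carried by an initial segment of the cumulative hierarchy, presented by an embedding
`f`, in which the elements of `x` are marked. -/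
def ofInitialSeg {α : Type u} {r : α → α → Prop}
    (f : r ≼i ((· ∈ ·) : ZFSet.{u} → ZFSet.{u} → Prop)) (x : ZFSet.{u}) : Mewo.{u} where
  carrier := α
  lt := r
  wf := f.toRelEmbedding.wellFounded ZFSet.mem_wf
  ext := isExtensional_mem.of_initialSeg f
  marked a := f a ∈ x

theorem toZFSet_ofInitialSeg {α : Type u} {r : α → α → Prop}
    (f : r ≼i ((· ∈ ·) : ZFSet.{u} → ZFSet.{u} → Prop)) {x : ZFSet.{u}}
    (hx : (x : Set ZFSet.{u}) ⊆ Set.range f) : (ofInitialSeg f x).toZFSet = x := by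
  ext z
  rw [mem_toZFSet (M := ofInitialSeg f x) f]
  constructor
  · rintro ⟨a, ha, rfl⟩
    exact ha
  · intro hz
    obtain ⟨a, rfl⟩ := hx hz
    exact ⟨a, hz, rfl⟩

theorem exists_covered_toZFSet_eq (x : ZFSet.{u}) : ∃ M : Mewo.{u}, M.Covered ∧ M.toZFSet = x := by
  have := small_transGen_mem x
  obtain ⟨α, r, f, hf⟩ :=
    exists_initialSeg_range_eq (S := {z | TransGen (· ∈ ·) z x}) fun _ hy _ hz => hy.head hz
  have htoZFSet : (ofInitialSeg f x).toZFSet = x :=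
    toZFSet_ofInitialSeg f fun z hz => hf ▸ TransGen.single hz
  refine ⟨ofInitialSeg f x, (covered_iff_range_eq f).2 ?_, htoZFSet⟩
  rw [htoZFSet]
  exact hf

end Mewo

/-- the cumulative hierarchy `ZFSet.{u}` is equivalent to the covered
mewos: there is a surjection from covered mewos to `ZFSet.{u}` that identifies exactly
the isomorphic covered mewos and turns bounded simulation into membership. -/
theorem zfSet_equiv_covered_mewos :
    ∃ F : { M : Mewo.{u} // M.Covered } → ZFSet.{u},
      Function.Surjective F ∧
      (∀ X Y : { M : Mewo.{u} // M.Covered }, F X = F Y ↔ Nonempty (MewoIso X.1 Y.1)) ∧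
      (∀ X Y : { M : Mewo.{u} // M.Covered }, F X ∈ F Y ↔ BoundedSim X.1 Y.1) := by
  refine ⟨fun M => M.1.toZFSet, fun x => ?_, fun X Y => X.2.toZFSet_eq_iff Y.2,
    fun X Y => X.2.toZFSet_mem_iff⟩
  obtain ⟨M, hM, hMx⟩ := Mewo.exists_covered_toZFSet_eq x
  exact ⟨⟨M, hM⟩, hMx⟩
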